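/- Let (A, [-,-,-]₁, [-,-,-]₂) be a compatible ternary Leibniz algebra over a field K and β : A → A an injective averaging operator for both brackets. Define [x,y,z]ᵢᵝ := [β(x),β(y),z]ᵢ for i = 1,2. Then (A, [-,-,-]₁ᵝ, [-,-,-]₂ᵝ) is a compatible ternary Leibniz algebra. Moreover, β is a morphism of ternary Leibniz algebras from (A, [-,-,-]ᵝ) to (A, [-,-,-]), where [-,-,-] := [-,-,-]₁ + [-,-,-]₂ and [-,-,-]ᵝ := [-,-,-]₁ᵝ + [-,-,-]₂ᵝ; that is, β([x,y,z]ᵝ) = [β(x),β(y),β(z)] for all x,y,z ∈ A. -/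

import Mathlib

variable {K : Type*} [Field K] {A : Type*} [AddCommGroup A] [Module K A]

/-- The (right) ternary Leibniz identity for a ternary bracket. -/
def TernaryLeibnizId (b : A → A → A → A) : Prop :=
  ∀ x y z t u : A,
    b (b x y z) t u = b x y (b z t u) + b x (b y t u) z + b (b x t u) y z

/-- Compatibility of two ternary brackets. -/
def TernaryCompat (b₁ b₂ : A → A → A → A) : Prop :=
  ∀ x y z t u : A,
    b₂ (b₁ x y z) t u + b₁ (b₂ x y z) t u =
      b₂ x y (b₁ z t u) + b₁ x y (b₂ z t u) + b₂ x (b₁ y t u) z + b₁ x (b₂ y t u) z +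
        b₂ (b₁ x t u) y z + b₁ (b₂ x t u) y z

/-- An averaging operator on a ternary Leibniz algebra. -/
def IsTernaryAveraging (t : A → A → A → A) (β : A → A) : Prop :=
  ∀ x y z : A,
    β (t (β x) (β y) z) = t (β x) (β y) (β z) ∧
      β (t (β x) y (β z)) = t (β x) (β y) (β z) ∧
      β (t x (β y) (β z)) = t (β x) (β y) (β z)

/-!
The first averaging identity says that `β` is a morphism from `[-,-,-]ᵢᵝ` to `[-,-,-]ᵢ`. An
injective additive morphism reflects any identity between sums of iterated brackets: `β` carries
both sides to the same identity evaluated at `β x, β y, …`, where it holds by assumption.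
-/

/-- A morphism from the ternary bracket `b` on `B` to the ternary bracket `c` on `C`. Only the
bracket is involved: additivity or linearity of `f` is expressed by the type of `f`. -/
structure IsTernaryHom {B C : Type*} (b : B → B → B → B) (c : C → C → C → C) (f : B → C) :
    Prop where
  map_bracket : ∀ x y z, f (b x y z) = c (f x) (f y) (f z)

theorem IsTernaryHom.add {F B C : Type*} [Add B] [Add C] [FunLike F B C] [AddHomClass F B C]
    {b₁ b₂ : B → B → B → B} {c₁ c₂ : C → C → C → C} {f : F}
    (h₁ : IsTernaryHom b₁ c₁ f) (h₂ : IsTernaryHom b₂ c₂ f) :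
    IsTernaryHom (b₁ + b₂) (c₁ + c₂) f where
  map_bracket x y z := by
    simp only [Pi.add_apply, map_add, h₁.map_bracket, h₂.map_bracket]

section Pullback

variable {F B : Type*} [AddCommGroup B] [FunLike F B A] [AddHomClass F B A] {f : F}

theorem TernaryLeibnizId.of_injective {b : B → B → B → B} {c : A → A → A → A}
    (hc : TernaryLeibnizId c) (hf : Function.Injective f) (hbc : IsTernaryHom b c f) :
    TernaryLeibnizId b := by
  intro x y z t u
  apply hf
  simpa only [map_add, hbc.map_bracket] using hc (f x) (f y) (f z) (f t) (f u)

theorem TernaryCompat.of_injective {b₁ b₂ : B → B → B → B} {c₁ c₂ : A → A → A → A}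
    (hc : TernaryCompat c₁ c₂) (hf : Function.Injective f)
    (h₁ : IsTernaryHom b₁ c₁ f) (h₂ : IsTernaryHom b₂ c₂ f) :
    TernaryCompat b₁ b₂ := by
  intro x y z t u
  apply hf
  simpa only [map_add, h₁.map_bracket, h₂.map_bracket] using hc (f x) (f y) (f z) (f t) (f u)

end Pullback

/-- The bracket `[x, y, z]ᵝ := [β x, β y, z]` induced by an operator `β`. -/
def inducedBracket {B : Type*} (b : B → B → B → B) (β : B → B) : B → B → B → B :=
  fun x y z => b (β x) (β y) z

theorem IsTernaryAveraging.isTernaryHom_inducedBracket {B : Type*} {b : B → B → B → B}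
    {β : B → B} (h : IsTernaryAveraging b β) : IsTernaryHom (inducedBracket b β) b β where
  map_bracket x y z := (h x y z).1

theorem averaging_compatible_ternary_both_general {F : Type*} [FunLike F A A] [AddHomClass F A A]
    {b₁ b₂ : A → A → A → A} (h₁ : TernaryLeibnizId b₁) (h₂ : TernaryLeibnizId b₂)
    (hc : TernaryCompat b₁ b₂) {β : F} (hinj : Function.Injective β)
    (hβ₁ : IsTernaryHom (inducedBracket b₁ β) b₁ β)
    (hβ₂ : IsTernaryHom (inducedBracket b₂ β) b₂ β) :
    TernaryLeibnizId (inducedBracket b₁ β) ∧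
      TernaryLeibnizId (inducedBracket b₂ β) ∧
      TernaryCompat (inducedBracket b₁ β) (inducedBracket b₂ β) ∧
      IsTernaryHom (inducedBracket b₁ β + inducedBracket b₂ β) (b₁ + b₂) β :=
  ⟨h₁.of_injective hinj hβ₁, h₂.of_injective hinj hβ₂, hc.of_injective hinj hβ₁ hβ₂, hβ₁.add hβ₂⟩

/-- Let `(A, [-,-,-]₁, [-,-,-]₂)` be a compatible ternary Leibniz algebra and `β` an injective
averaging operator for both brackets. Then `[x,y,z]ᵢᵝ := [β(x),β(y),z]ᵢ` define a compatible
ternary Leibniz algebra, and `β` is a morphism of ternary Leibniz algebras from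
`(A, [-,-,-]₁ᵝ + [-,-,-]₂ᵝ)` to `(A, [-,-,-]₁ + [-,-,-]₂)`. -/
theorem averaging_compatible_ternary_both (t₁ t₂ : A →ₗ[K] A →ₗ[K] A →ₗ[K] A)
    (h₁ : TernaryLeibnizId fun x y z => t₁ x y z)
    (h₂ : TernaryLeibnizId fun x y z => t₂ x y z)
    (hc : TernaryCompat (fun x y z => t₁ x y z) (fun x y z => t₂ x y z))
    (β : A →ₗ[K] A) (hinj : Function.Injective β)
    (hav₁ : IsTernaryAveraging (fun x y z => t₁ x y z) β)
    (hav₂ : IsTernaryAveraging (fun x y z => t₂ x y z) β) :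
    TernaryLeibnizId (fun x y z => t₁ (β x) (β y) z) ∧
      TernaryLeibnizId (fun x y z => t₂ (β x) (β y) z) ∧
      TernaryCompat (fun x y z => t₁ (β x) (β y) z)
        (fun x y z => t₂ (β x) (β y) z) ∧
      ∀ x y z : A,
        β (t₁ (β x) (β y) z + t₂ (β x) (β y) z) =
          t₁ (β x) (β y) (β z) + t₂ (β x) (β y) (β z) := by
  obtain ⟨leibniz₁, leibniz₂, compat, hom⟩ :=
    averaging_compatible_ternary_both_general h₁ h₂ hc hinj
      hav₁.isTernaryHom_inducedBracket hav₂.isTernaryHom_inducedBracket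
  exact ⟨leibniz₁, leibniz₂, compat, hom.map_bracket⟩
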